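/- arXiv:2206.01654 — 3 statements merged into one kernel-verified Lean document; each statement's English description precedes it below -/
import Mathlib

section
/- Let P* ∈ ℙ, let F be a collection of real-valued 𝒜-measurable functions on Ω, and let 𝒰 = {Q ∈ ℙ : Q ≪ P*, Q(|f|) < ∞ and Q(f) = 0 for each f ∈ F}. Assume lim_{k→∞} sup_{Q ∈ 𝒰} Q(|f|·1(|f| > k)) = 0 for all f ∈ F. Then M ∩ 𝒰 ≠ ∅ if and only if Σ_{i=1}^n μ_i(f_i) ≥ inf_{Q ∈ 𝒰} Q(⊕_{i=1}^n f_i) whenever f_i is a bounded 𝒜_i-measurable real function for each i = 1,…,n (with the convention inf ∅ = ∞). -/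
open MeasureTheory Set ENNReal

namespace FATransport

variable {α : Type*} [MeasurableSpace α]

/-- The collection of measurable sets of `α` (the σ-field `𝒜`), as a type. -/
abbrev MSet (α : Type*) [MeasurableSpace α] := {A : Set α // MeasurableSet A}

/-- A finitely additive probability on the σ-field of `α`, viewed as an element
of `[0,1]^𝒜`: it maps the whole space to `1` and is additive on disjoint pairs. -/
def IsFAP (P : MSet α → unitInterval) : Prop :=
  (P ⟨Set.univ, MeasurableSet.univ⟩ : ℝ) = 1 ∧
    ∀ A B : MSet α, Disjoint A.1 B.1 →
      (P ⟨A.1 ∪ B.1, A.2.union B.2⟩ : ℝ) = (P A : ℝ) + (P B : ℝ)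

/-- `ℙ`, the set of all finitely additive probabilities on `𝒜`, as a subset of
`[0,1]^𝒜` (with its product topology). -/
def FAPs (α : Type*) [MeasurableSpace α] : Set (MSet α → unitInterval) :=
  {P | IsFAP P}

/-- Integral of a simple function with respect to a finitely additive set function. -/
noncomputable def simpleInt (P : MSet α → unitInterval) (s : SimpleFunc α ℝ) : ℝ :=
  ∑ y ∈ s.range, y * (P ⟨(⇑s) ⁻¹' {y}, s.measurableSet_fiber y⟩ : ℝ)

/-- `P(f)` for a bounded measurable `f : α → ℝ`: the supremum of the integrals of
simple functions below `f` (for a f.a.p. `P` and bounded measurable `f` this agrees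
with the integral defined by uniform approximation by simple functions). -/
noncomputable def fapInt (P : MSet α → unitInterval) (f : α → ℝ) : ℝ :=
  sSup (simpleInt P '' {s : SimpleFunc α ℝ | ∀ x, s x ≤ f x})

/-- `P(c) = sup_k P(c ∧ k)` for a `[0,∞]`-valued `c`. -/
noncomputable def fapIntTop (P : MSet α → unitInterval) (c : α → ℝ≥0∞) : ℝ≥0∞ :=
  ⨆ k : ℕ, ENNReal.ofReal (fapInt P (fun x => (c x ⊓ (k : ℝ≥0∞)).toReal))

/-- A real-valued `f` is `P`-integrable iff `P(|f|) < ∞`. -/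
def FapIntegrable (P : MSet α → unitInterval) (f : α → ℝ) : Prop :=
  fapIntTop P (fun x => ENNReal.ofReal |f x|) < ⊤

/-- `P(f) = P(f⁺) - P(f⁻)` for a (`P`-integrable) real-valued `f`. -/
noncomputable def fapIntR (P : MSet α → unitInterval) (f : α → ℝ) : ℝ :=
  (fapIntTop P (fun x => ENNReal.ofReal (f x))).toReal -
    (fapIntTop P (fun x => ENNReal.ofReal (-f x))).toReal

/-- `P ≪ Q` for finitely additive probabilities. -/
def FapAC (P Q : MSet α → unitInterval) : Prop :=
  ∀ A : MSet α, (Q A : ℝ) = 0 → (P A : ℝ) = 0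

variable {n : ℕ} {Ω : Fin n → Type*} [∀ i, MeasurableSpace (Ω i)]

/-- `M`, the set of finitely additive probabilities on `𝒜 = ⊗ᵢ 𝒜ᵢ` whose
`i`-th marginal is `μ i` for every `i`. -/
def couplings (μ : ∀ i, Measure (Ω i)) : Set (MSet (∀ i, Ω i) → unitInterval) :=
  {P | IsFAP P ∧ ∀ (i : Fin n) (B : Set (Ω i)) (hB : MeasurableSet B),
    (P ⟨(fun ω => ω i) ⁻¹' B, (measurable_pi_apply i) hB⟩ : ℝ) = (μ i B).toReal}

end FATransport

namespace FATransport

variable {n : ℕ} {Ω : Fin n → Type*} [∀ i, MeasurableSpace (Ω i)]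

/-- Condition (4.1) of the paper: `Σᵢ μᵢ(fᵢ) ≥ inf_{Q ∈ 𝒰} Q(⊕ᵢ fᵢ)` for all bounded
measurable `fᵢ : Ωᵢ → ℝ`. The infimum is taken in `EReal`, so that `inf ∅ = ∞` (and
the condition fails when `𝒰 = ∅`). -/
def DualCond (μ : ∀ i, Measure (Ω i))
    (U : Set (MSet (∀ i, Ω i) → unitInterval)) : Prop :=
  ∀ f : ∀ i, Ω i → ℝ, (∀ i, Measurable (f i)) → (∀ i, ∃ C, ∀ x, |f i x| ≤ C) →
    (⨅ Q ∈ U, ((fapInt Q (fun ω => ∑ i, f i (ω i)) : ℝ) : EReal)) ≤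
      ((∑ i, ∫ x, f i x ∂(μ i) : ℝ) : EReal)

end FATransport

/-!
Let `U ⊆ [0,1]^𝒜` be a closed set of finitely additive probabilities, stable under mixtures. It is
compact, so its image under the marginal map is compact and convex in `∏ᵢ ℝ^𝒜ᵢ`. If the point
`(μᵢ)` is not in this image, Hahn–Banach separates it by a continuous functional. In the product
topology such a functional is a finite combination of evaluations at measurable sets, that is,
`ν ↦ ∑ᵢ νᵢ(fᵢ)` with `fᵢ` simple, and this contradicts the dual condition.

It remains to see that `𝒰` is closed and stable under mixtures. The constraint `Q(f) = 0` is not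
closed in `Q` when `f` is unbounded. However, with `ε k = sup_{Q ∈ 𝒰} Q(|f|·1(|f| > k)) → 0`, every
`Q ∈ 𝒰` satisfies `Q(|f|·1(|f| > k)) ≤ ε k` and `|Q(f clipped at k)| ≤ ε k` for all `k`. Conversely
these bounds force `Q(|f|) < ∞` and `Q(f) = 0`, and they only involve bounded integrands.
-/

namespace FATransport

section FinitelyAdditive

variable {α β : Type*} [MeasurableSpace α] [MeasurableSpace β] {P : MSet α → unitInterval}

theorem IsFAP.apply_empty (hP : IsFAP P) : (P ⟨∅, MeasurableSet.empty⟩ : ℝ) = 0 := by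
  simpa using hP.2 ⟨∅, MeasurableSet.empty⟩ ⟨∅, MeasurableSet.empty⟩ (by simp)

open Classical in
/-- The set function `P` with values in the operators on `ℝ` (multiplication by `P A`, and `0` on
nonmeasurable sets): the form in which Mathlib's `SimpleFunc.setToSimpleFunc` integrates simple
functions against a set function. -/
noncomputable def setToCLM (P : MSet α → unitInterval) (A : Set α) : ℝ →L[ℝ] ℝ :=
  if hA : MeasurableSet A then (P ⟨A, hA⟩ : ℝ) • ContinuousLinearMap.id ℝ ℝ else 0

theorem setToCLM_apply (P : MSet α → unitInterval) {A : Set α} (hA : MeasurableSet A) (x : ℝ) :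
    setToCLM P A x = (P ⟨A, hA⟩ : ℝ) * x := by
  simp [setToCLM, hA]

theorem IsFAP.setToCLM_empty (hP : IsFAP P) : setToCLM P ∅ = 0 := by
  ext
  rw [setToCLM_apply P MeasurableSet.empty, hP.apply_empty, zero_mul]
  rfl

theorem IsFAP.finMeasAdditive_setToCLM (hP : IsFAP P) :
    FinMeasAdditive (0 : Measure α) (setToCLM P) := by
  intro A B hA hB _ _ hAB
  ext
  simp [setToCLM_apply, hA, hB, hA.union hB, hP.2 ⟨A, hA⟩ ⟨B, hB⟩ hAB]

theorem simpleInt_eq_setToSimpleFunc (P : MSet α → unitInterval) (s : SimpleFunc α ℝ) :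
    simpleInt P s = s.setToSimpleFunc (setToCLM P) :=
  Finset.sum_congr rfl fun y _ => by rw [setToCLM_apply P (s.measurableSet_fiber y), mul_comm]

theorem simpleInt_add (hP : IsFAP P) (s t : SimpleFunc α ℝ) :
    simpleInt P (s + t) = simpleInt P s + simpleInt P t := by
  simp only [simpleInt_eq_setToSimpleFunc]
  exact SimpleFunc.setToSimpleFunc_add (μ := 0) _ hP.finMeasAdditive_setToCLM (by simp) (by simp)

theorem simpleInt_smul (hP : IsFAP P) (c : ℝ) (s : SimpleFunc α ℝ) :
    simpleInt P (c • s) = c * simpleInt P s := by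
  simp only [simpleInt_eq_setToSimpleFunc]
  exact SimpleFunc.setToSimpleFunc_smul_real (μ := 0) _ hP.finMeasAdditive_setToCLM c (by simp)

theorem simpleInt_mono (hP : IsFAP P) {s t : SimpleFunc α ℝ} (h : ∀ x, s x ≤ t x) :
    simpleInt P s ≤ simpleInt P t := by
  simp only [simpleInt_eq_setToSimpleFunc]
  refine SimpleFunc.setToSimpleFunc_mono (μ := 0) hP.finMeasAdditive_setToCLM ?_
    (by simp) (by simp) h
  intro A hA _ x hx
  rw [setToCLM_apply P hA]
  exact mul_nonneg (P _).2.1 hx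

theorem simpleInt_const (hP : IsFAP P) (c : ℝ) : simpleInt P (SimpleFunc.const α c) = c := by
  rw [simpleInt_eq_setToSimpleFunc, SimpleFunc.setToSimpleFunc_const _ hP.setToCLM_empty,
    setToCLM_apply P MeasurableSet.univ, hP.1, one_mul]

theorem simpleInt_indicator_one (hP : IsFAP P) {A : Set α} (hA : MeasurableSet A) :
    simpleInt P (SimpleFunc.piecewise A hA (SimpleFunc.const α 1) (SimpleFunc.const α 0)) =
      P ⟨A, hA⟩ := by
  rw [simpleInt_eq_setToSimpleFunc, SimpleFunc.setToSimpleFunc_indicator _ hP.setToCLM_empty,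
    setToCLM_apply P hA, mul_one]

theorem continuous_simpleInt (s : SimpleFunc α ℝ) :
    Continuous fun P : MSet α → unitInterval => simpleInt P s := by
  unfold simpleInt
  fun_prop

/-- The space of bounded measurable real functions, on which a finitely additive probability acts
as a positive linear functional. -/
def boundedMeasurable (α : Type*) [MeasurableSpace α] : Submodule ℝ (α → ℝ) where
  carrier := {g | Measurable g ∧ ∃ C, ∀ x, |g x| ≤ C}
  zero_mem' := ⟨measurable_const, 0, by simp⟩
  add_mem' := fun ⟨hg, C, hC⟩ ⟨hh, D, hD⟩ =>
    ⟨hg.add hh, C + D, fun x => (abs_add_le _ _).trans (add_le_add (hC x) (hD x))⟩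
  smul_mem' := fun c _ ⟨hg, C, hC⟩ =>
    ⟨hg.const_smul c, |c| * C, fun x => by
      simpa [abs_mul] using mul_le_mul_of_nonneg_left (hC x) (abs_nonneg c)⟩

theorem indicator_one_mem_boundedMeasurable {A : Set α} (hA : MeasurableSet A) :
    A.indicator 1 ∈ boundedMeasurable α :=
  ⟨measurable_one.indicator hA, 1, fun x => by by_cases hx : x ∈ A <;> simp [hx]⟩

theorem bddAbove_range_of_mem_boundedMeasurable {g : α → ℝ} (hg : g ∈ boundedMeasurable α) :
    BddAbove (range g) :=
  let ⟨_, C, hC⟩ := hg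
  ⟨C, forall_mem_range.2 fun x => (abs_le.1 (hC x)).2⟩

theorem comp_mem_boundedMeasurable {g : β → ℝ} (hg : g ∈ boundedMeasurable β) {φ : α → β}
    (hφ : Measurable φ) : g ∘ φ ∈ boundedMeasurable α :=
  ⟨hg.1.comp hφ, hg.2.imp fun _ hC x => hC (φ x)⟩

theorem integrable_of_mem_boundedMeasurable {μ : Measure α} [IsFiniteMeasure μ] {g : α → ℝ}
    (hg : g ∈ boundedMeasurable α) : Integrable g μ :=
  let ⟨hgm, C, hC⟩ := hg
  Integrable.of_bound hgm.aestronglyMeasurable C (Filter.Eventually.of_forall hC)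

theorem exists_simpleFunc_abs_sub_le {g : α → ℝ} (hg : g ∈ boundedMeasurable α) {ε : ℝ}
    (hε : 0 < ε) : ∃ s : SimpleFunc α ℝ, ∀ x, |g x - s x| ≤ ε := by
  obtain ⟨hgm, C, hC⟩ := hg
  have hfin : (range fun x => ⌊g x / ε⌋).Finite := by
    refine (finite_Icc ⌊-C / ε⌋ ⌊C / ε⌋).subset ?_
    rintro _ ⟨x, rfl⟩
    obtain ⟨hlower, hupper⟩ := abs_le.1 (hC x)
    exact ⟨Int.floor_le_floor (by gcongr), Int.floor_le_floor (by gcongr)⟩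
  let floor : SimpleFunc α ℤ :=
    ⟨fun x => ⌊g x / ε⌋,
      fun y => Int.measurable_floor.comp (hgm.div_const ε) (measurableSet_singleton y), hfin⟩
  refine ⟨floor.map fun z : ℤ => ε * z, fun x => ?_⟩
  have hfract : g x - ε * ⌊g x / ε⌋ = ε * Int.fract (g x / ε) := by
    rw [Int.fract, mul_sub, mul_div_cancel₀ _ hε.ne']
  change |g x - ε * ⌊g x / ε⌋| ≤ ε
  rw [hfract, abs_of_nonneg (mul_nonneg hε.le (Int.fract_nonneg _))]
  exact mul_le_of_le_one_right hε.le (Int.fract_lt_one _).le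

theorem exists_simpleFunc_tendstoUniformly {g : α → ℝ} (hg : g ∈ boundedMeasurable α) :
    ∃ s : ℕ → SimpleFunc α ℝ, TendstoUniformly (fun n => s n) g Filter.atTop := by
  choose s hs using fun n : ℕ =>
    exists_simpleFunc_abs_sub_le hg (Nat.one_div_pos_of_nat (α := ℝ) (n := n))
  refine ⟨s, Metric.tendstoUniformly_iff.2 fun ε hε => ?_⟩
  filter_upwards [tendsto_one_div_add_atTop_nhds_zero_nat.eventually_lt_const hε] with n hn x
  exact (hs n x).trans_lt hn

theorem simpleInt_mem_upperBounds (hP : IsFAP P) {g : α → ℝ} {t : SimpleFunc α ℝ}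
    (h : ∀ x, g x ≤ t x) :
    simpleInt P t ∈ upperBounds (simpleInt P '' {s : SimpleFunc α ℝ | ∀ x, s x ≤ g x}) := by
  rintro _ ⟨s, hs, rfl⟩
  exact simpleInt_mono hP fun x => (hs x).trans (h x)

theorem simpleInt_le_fapInt (hP : IsFAP P) {g : α → ℝ} (hg : BddAbove (range g))
    {s : SimpleFunc α ℝ} (h : ∀ x, s x ≤ g x) : simpleInt P s ≤ fapInt P g :=
  let ⟨C, hC⟩ := hg
  le_csSup ⟨_, simpleInt_mem_upperBounds (t := .const α C) hP fun x => hC ⟨x, rfl⟩⟩ ⟨s, h, rfl⟩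

theorem fapInt_mono (hP : IsFAP P) {g h : α → ℝ} (hg : BddBelow (range g))
    (hh : BddAbove (range h)) (hgh : ∀ x, g x ≤ h x) : fapInt P g ≤ fapInt P h := by
  obtain ⟨C, hC⟩ := hg
  refine csSup_le ⟨_, .const α C, fun x => hC ⟨x, rfl⟩, rfl⟩ ?_
  rintro _ ⟨s, hs, rfl⟩
  exact simpleInt_le_fapInt hP hh fun x => (hs x).trans (hgh x)

theorem fapInt_simpleFunc (hP : IsFAP P) (s : SimpleFunc α ℝ) : fapInt P s = simpleInt P s :=
  IsGreatest.csSup_eq ⟨⟨s, fun _ => le_rfl, rfl⟩, simpleInt_mem_upperBounds hP fun _ => le_rfl⟩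

theorem fapInt_nonneg (hP : IsFAP P) {g : α → ℝ} (hg : BddAbove (range g)) (h : ∀ x, 0 ≤ g x) :
    0 ≤ fapInt P g := by
  simpa only [simpleInt_const hP] using simpleInt_le_fapInt hP hg (s := .const α 0) h

theorem fapInt_indicator_one (hP : IsFAP P) {A : Set α} (hA : MeasurableSet A) :
    fapInt P (A.indicator 1) = P ⟨A, hA⟩ := by
  rw [← simpleInt_indicator_one hP hA, ← fapInt_simpleFunc hP]
  congr 1

theorem abs_fapInt_sub_simpleInt_le (hP : IsFAP P) {g : α → ℝ} {s : SimpleFunc α ℝ} {ε : ℝ}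
    (h : ∀ x, |g x - s x| ≤ ε) : |fapInt P g - simpleInt P s| ≤ ε := by
  have hlower (x : α) : (s + .const α (-ε)) x ≤ g x := by
    simpa using neg_le_sub_iff_le_add.1 (abs_le.1 (h x)).1
  have hupper (x : α) : g x ≤ (s + .const α ε) x := by
    simpa using sub_le_iff_le_add'.1 (abs_le.1 (h x)).2
  have hbounds := simpleInt_mem_upperBounds hP hupper
  have hle : simpleInt P s + -ε ≤ fapInt P g := by
    rw [← simpleInt_const hP (-ε), ← simpleInt_add hP]
    exact le_csSup ⟨_, hbounds⟩ ⟨_, hlower, rfl⟩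
  have hge : fapInt P g ≤ simpleInt P s + ε := by
    rw [← simpleInt_const hP ε, ← simpleInt_add hP]
    exact csSup_le ⟨_, _, hlower, rfl⟩ hbounds
  exact abs_le.2 ⟨by linarith, by linarith⟩

theorem tendstoUniformlyOn_simpleInt {s : ℕ → SimpleFunc α ℝ} {g : α → ℝ}
    (hs : TendstoUniformly (fun n => s n) g Filter.atTop) :
    TendstoUniformlyOn (fun n P => simpleInt P (s n)) (fun P => fapInt P g) Filter.atTop
      (FAPs α) := by
  refine Metric.tendstoUniformlyOn_iff.2 fun ε hε => ?_
  filter_upwards [Metric.tendstoUniformly_iff.1 hs (ε / 2) (half_pos hε)] with n hn P hP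
  exact (abs_fapInt_sub_simpleInt_le hP fun x => (hn x).le).trans_lt (half_lt_self hε)

theorem tendsto_simpleInt (hP : IsFAP P) {s : ℕ → SimpleFunc α ℝ} {g : α → ℝ}
    (hs : TendstoUniformly (fun n => s n) g Filter.atTop) :
    Filter.Tendsto (fun n => simpleInt P (s n)) Filter.atTop (nhds (fapInt P g)) :=
  (tendstoUniformlyOn_simpleInt hs).tendsto_at hP

theorem continuousOn_fapInt {g : α → ℝ} (hg : g ∈ boundedMeasurable α) :
    ContinuousOn (fun P => fapInt P g) (FAPs α) := by
  obtain ⟨s, hs⟩ := exists_simpleFunc_tendstoUniformly hg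
  exact (tendstoUniformlyOn_simpleInt hs).continuousOn
    (Filter.Frequently.of_forall fun n => (continuous_simpleInt (s n)).continuousOn)

theorem fapInt_add (hP : IsFAP P) {g h : α → ℝ} (hg : g ∈ boundedMeasurable α)
    (hh : h ∈ boundedMeasurable α) : fapInt P (g + h) = fapInt P g + fapInt P h := by
  obtain ⟨s, hs⟩ := exists_simpleFunc_tendstoUniformly hg
  obtain ⟨t, ht⟩ := exists_simpleFunc_tendstoUniformly hh
  refine tendsto_nhds_unique (tendsto_simpleInt (s := s + t) hP (hs.add ht)) ?_
  simpa only [Pi.add_apply, simpleInt_add hP] using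
    (tendsto_simpleInt hP hs).add (tendsto_simpleInt hP ht)

theorem fapInt_smul (hP : IsFAP P) (c : ℝ) {g : α → ℝ} (hg : g ∈ boundedMeasurable α) :
    fapInt P (c • g) = c * fapInt P g := by
  obtain ⟨s, hs⟩ := exists_simpleFunc_tendstoUniformly hg
  refine tendsto_nhds_unique (tendsto_simpleInt (s := c • s) hP
    ((uniformContinuous_const_smul c).comp_tendstoUniformly hs)) ?_
  simpa only [Pi.smul_apply, simpleInt_smul hP] using (tendsto_simpleInt hP hs).const_mul c

theorem fapInt_neg (hP : IsFAP P) {g : α → ℝ} (hg : g ∈ boundedMeasurable α) :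
    fapInt P (-g) = -fapInt P g := by
  rw [← neg_one_smul ℝ g, fapInt_smul hP _ hg, neg_one_mul]

theorem fapInt_sub (hP : IsFAP P) {g h : α → ℝ} (hg : g ∈ boundedMeasurable α)
    (hh : h ∈ boundedMeasurable α) : fapInt P (g - h) = fapInt P g - fapInt P h := by
  rw [sub_eq_add_neg, fapInt_add hP hg (neg_mem hh), fapInt_neg hP hh, sub_eq_add_neg]

theorem fapInt_zero (hP : IsFAP P) : fapInt P 0 = 0 := by
  simpa using fapInt_smul hP 0 (zero_mem (boundedMeasurable α))

theorem fapInt_sum (hP : IsFAP P) {ι : Type*} (S : Finset ι) {g : ι → α → ℝ}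
    (hg : ∀ i ∈ S, g i ∈ boundedMeasurable α) :
    fapInt P (∑ i ∈ S, g i) = ∑ i ∈ S, fapInt P (g i) := by
  classical
  induction S using Finset.induction_on with
  | empty => simpa using fapInt_zero hP
  | insert i S hi ih =>
    have hS (j : ι) (hj : j ∈ S) := hg j (Finset.mem_insert_of_mem hj)
    rw [Finset.sum_insert hi, Finset.sum_insert hi,
      fapInt_add hP (hg i (Finset.mem_insert_self i S)) (sum_mem hS), ih hS]

end FinitelyAdditive

section Pushforward

variable {α β : Type*} [MeasurableSpace α] [MeasurableSpace β]

/-- The image `P ∘ φ⁻¹` of a set function under a measurable map. -/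
def pushforward {φ : α → β} (hφ : Measurable φ) (P : MSet α → unitInterval) :
    MSet β → unitInterval :=
  fun B => P ⟨φ ⁻¹' B, hφ B.2⟩

theorem IsFAP.pushforward {P : MSet α → unitInterval} (hP : IsFAP P) {φ : α → β}
    (hφ : Measurable φ) : IsFAP (pushforward hφ P) :=
  ⟨hP.1, fun A B hAB => hP.2 ⟨φ ⁻¹' A, hφ A.2⟩ ⟨φ ⁻¹' B, hφ B.2⟩ (hAB.preimage φ)⟩

theorem simpleInt_pushforward {P : MSet α → unitInterval} (hP : IsFAP P) {φ : α → β}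
    (hφ : Measurable φ) (s : SimpleFunc β ℝ) :
    simpleInt (pushforward hφ P) s = simpleInt P (s.comp φ hφ) := by
  refine (Finset.sum_subset (SimpleFunc.range_comp_subset_range s hφ) fun y _ hy => ?_).symm
  have hempty : φ ⁻¹' (s ⁻¹' {y}) = ∅ :=
    eq_empty_of_forall_notMem fun x hx => hy (SimpleFunc.mem_range.2 ⟨x, hx⟩)
  simp only [pushforward, hempty, hP.apply_empty, mul_zero]

theorem fapInt_pushforward {P : MSet α → unitInterval} (hP : IsFAP P) {φ : α → β}
    (hφ : Measurable φ) {g : β → ℝ} (hg : g ∈ boundedMeasurable β) :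
    fapInt (pushforward hφ P) g = fapInt P (g ∘ φ) := by
  obtain ⟨s, hs⟩ := exists_simpleFunc_tendstoUniformly hg
  refine tendsto_nhds_unique (tendsto_simpleInt (hP.pushforward hφ) hs) ?_
  simp only [simpleInt_pushforward hP]
  exact tendsto_simpleInt (s := fun n => (s n).comp φ hφ) hP (hs.comp φ)

end Pushforward

section OfMeasure

variable {α : Type*} [MeasurableSpace α] (μ : Measure α) [IsProbabilityMeasure μ]

/-- A probability measure regarded as a finitely additive probability. -/
noncomputable def ofMeasure : MSet α → unitInterval :=
  fun A => ⟨μ.real A, measureReal_nonneg, measureReal_le_one⟩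

theorem isFAP_ofMeasure : IsFAP (ofMeasure μ) :=
  ⟨probReal_univ, fun _ B hAB => measureReal_union hAB B.2⟩

theorem simpleInt_ofMeasure (s : SimpleFunc α ℝ) : simpleInt (ofMeasure μ) s = ∫ x, s x ∂μ := by
  rw [SimpleFunc.integral_eq_sum s (SimpleFunc.integrable_of_isFiniteMeasure s)]
  exact Finset.sum_congr rfl fun y _ => mul_comm _ _

theorem fapInt_ofMeasure_le {g : α → ℝ} (hg : g ∈ boundedMeasurable α) :
    fapInt (ofMeasure μ) g ≤ ∫ x, g x ∂μ := by
  obtain ⟨-, C, hC⟩ := id hg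
  refine csSup_le ⟨_, .const α (-C), fun x => (abs_le.1 (hC x)).1, rfl⟩ ?_
  rintro _ ⟨s, hs, rfl⟩
  rw [simpleInt_ofMeasure]
  exact integral_mono (SimpleFunc.integrable_of_isFiniteMeasure s)
    (integrable_of_mem_boundedMeasurable hg) hs

theorem fapInt_ofMeasure {g : α → ℝ} (hg : g ∈ boundedMeasurable α) :
    fapInt (ofMeasure μ) g = ∫ x, g x ∂μ := by
  refine (fapInt_ofMeasure_le μ hg).antisymm ?_
  have hneg := fapInt_ofMeasure_le μ (neg_mem hg)
  rw [fapInt_neg (isFAP_ofMeasure μ) hg] at hneg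
  simpa only [Pi.neg_apply, integral_neg, neg_le_neg_iff] using hneg

end OfMeasure

section Mixtures

variable {α : Type*} [MeasurableSpace α] {P Q : MSet α → unitInterval}

/-- The mixture `(1 - t) P + t Q`. -/
noncomputable def mix (P Q : MSet α → unitInterval) (t : unitInterval) : MSet α → unitInterval :=
  fun A => Icc.convexComb (P A) (Q A) t

/-- Convexity of a set of `[0,1]`-valued set functions, which do not form a vector space. -/
def MixClosed (U : Set (MSet α → unitInterval)) : Prop :=
  ∀ P ∈ U, ∀ Q ∈ U, ∀ t, mix P Q t ∈ U

theorem coe_mix (P Q : MSet α → unitInterval) (t : unitInterval) (A : MSet α) :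
    (mix P Q t A : ℝ) = (1 - t) * P A + t * Q A :=
  rfl

theorem IsFAP.mix (hP : IsFAP P) (hQ : IsFAP Q) (t : unitInterval) : IsFAP (mix P Q t) := by
  refine ⟨?_, fun A B hAB => ?_⟩
  · rw [coe_mix, hP.1, hQ.1]
    ring
  · rw [coe_mix, coe_mix, coe_mix, hP.2 A B hAB, hQ.2 A B hAB]
    ring

theorem simpleInt_mix (P Q : MSet α → unitInterval) (t : unitInterval) (s : SimpleFunc α ℝ) :
    simpleInt (mix P Q t) s = (1 - t) * simpleInt P s + t * simpleInt Q s := by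
  simp only [simpleInt, coe_mix, Finset.mul_sum, ← Finset.sum_add_distrib]
  exact Finset.sum_congr rfl fun y _ => by ring

theorem fapInt_mix (hP : IsFAP P) (hQ : IsFAP Q) (t : unitInterval) {g : α → ℝ}
    (hg : g ∈ boundedMeasurable α) :
    fapInt (mix P Q t) g = (1 - t) * fapInt P g + t * fapInt Q g := by
  obtain ⟨s, hs⟩ := exists_simpleFunc_tendstoUniformly hg
  refine tendsto_nhds_unique (tendsto_simpleInt (hP.mix hQ t) hs) ?_
  simp only [simpleInt_mix]
  exact ((tendsto_simpleInt hP hs).const_mul _).add ((tendsto_simpleInt hQ hs).const_mul _)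

theorem fapInt_mix_mem {C : Set ℝ} (hC : Convex ℝ C) (hP : IsFAP P) (hQ : IsFAP Q)
    {g : α → ℝ} (hg : g ∈ boundedMeasurable α) (hPg : fapInt P g ∈ C) (hQg : fapInt Q g ∈ C)
    (t : unitInterval) : fapInt (mix P Q t) g ∈ C := by
  rw [fapInt_mix hP hQ t hg]
  exact hC hPg hQg (sub_nonneg.2 t.2.2) t.2.1 (sub_add_cancel _ _)

theorem FapAC.mix {R : MSet α → unitInterval} (hP : FapAC P R) (hQ : FapAC Q R)
    (t : unitInterval) : FapAC (mix P Q t) R := by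
  intro A hA
  rw [coe_mix, hP A hA, hQ A hA, mul_zero, mul_zero, add_zero]

end Mixtures

section Topology

variable {α : Type*} [MeasurableSpace α]

theorem continuous_apply_real (A : MSet α) :
    Continuous fun P : MSet α → unitInterval => (P A : ℝ) := by
  fun_prop

theorem isClosed_FAPs : IsClosed (FAPs α) := by
  simp only [FAPs, IsFAP, ofPred_and, ofPred_forall]
  refine (isClosed_eq (continuous_apply_real _) continuous_const).inter ?_
  exact isClosed_iInter fun A => isClosed_iInter fun B => isClosed_iInter fun _ =>
    isClosed_eq (continuous_apply_real _) ((continuous_apply_real A).add (continuous_apply_real B))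

theorem isClosed_setOf_fapAC (R : MSet α → unitInterval) : IsClosed {Q | FapAC Q R} := by
  simp only [FapAC, ofPred_forall]
  exact isClosed_iInter fun A => isClosed_iInter fun _ =>
    isClosed_eq (continuous_apply_real A) continuous_const

theorem isClosed_setOf_fapInt_mem {g : α → ℝ} (hg : g ∈ boundedMeasurable α) {C : Set ℝ}
    (hC : IsClosed C) : IsClosed {P | IsFAP P ∧ fapInt P g ∈ C} :=
  (continuousOn_fapInt hg).preimage_isClosed_of_isClosed isClosed_FAPs hC

end Topology

section Duality

theorem exists_boundedMeasurable_fapInt_eq {α : Type*} [MeasurableSpace α]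
    (φ : (MSet α → ℝ) →L[ℝ] ℝ) :
    ∃ f ∈ boundedMeasurable α, ∀ P, IsFAP P → fapInt P f = φ fun A => P A := by
  have hspan : (φ : (MSet α → ℝ) →ₗ[ℝ] ℝ) ∈
      Submodule.span ℝ (range (LinearMap.proj : MSet α → (MSet α → ℝ) →ₗ[ℝ] ℝ)) :=
    (LinearMap.mem_span_iff_continuous _).2 φ.continuous
  simp only [← ContinuousLinearMap.coe_coe φ]
  generalize (φ : (MSet α → ℝ) →ₗ[ℝ] ℝ) = ψ at hspan ⊢
  induction hspan using Submodule.span_induction with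
  | mem _ hψ =>
    obtain ⟨A, rfl⟩ := hψ
    exact ⟨_, indicator_one_mem_boundedMeasurable A.2, fun P hP => fapInt_indicator_one hP A.2⟩
  | zero => exact ⟨0, zero_mem _, fun P hP => fapInt_zero hP⟩
  | add _ _ _ _ hψ hχ =>
    obtain ⟨f, hf, hfψ⟩ := hψ
    obtain ⟨g, hg, hgχ⟩ := hχ
    exact ⟨f + g, add_mem hf hg, fun P hP => by
      rw [fapInt_add hP hf hg, hfψ P hP, hgχ P hP, LinearMap.add_apply]⟩
  | smul c _ _ hψ =>
    obtain ⟨f, hf, hfψ⟩ := hψ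
    exact ⟨c • f, Submodule.smul_mem _ c hf, fun P hP => by
      rw [fapInt_smul hP c hf, hfψ P hP, LinearMap.smul_apply, smul_eq_mul]⟩

theorem exists_boundedMeasurable_sum_fapInt_eq {ι : Type*} [Fintype ι] {Ω : ι → Type*}
    [∀ i, MeasurableSpace (Ω i)] (φ : (∀ i, MSet (Ω i) → ℝ) →L[ℝ] ℝ) :
    ∃ f : ∀ i, Ω i → ℝ, (∀ i, f i ∈ boundedMeasurable (Ω i)) ∧
      ∀ ν : ∀ i, MSet (Ω i) → unitInterval, (∀ i, IsFAP (ν i)) →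
        ∑ i, fapInt (ν i) (f i) = φ fun i B => ν i B := by
  classical
  choose f hf hfφ using fun i =>
    exists_boundedMeasurable_fapInt_eq
      (φ.comp (ContinuousLinearMap.single ℝ (fun i => MSet (Ω i) → ℝ) i))
  refine ⟨f, hf, fun ν hν => ?_⟩
  simp only [hfφ _ _ (hν _), ContinuousLinearMap.comp_apply, ContinuousLinearMap.single_apply]
  rw [← map_sum, Finset.univ_sum_single fun i B => (ν i B : ℝ)]

/-- The `i`-th marginal of a set function on a product. -/
abbrev marginal {ι : Type*} {Ω : ι → Type*} [∀ i, MeasurableSpace (Ω i)]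
    (Q : MSet (∀ i, Ω i) → unitInterval) (i : ι) : MSet (Ω i) → unitInterval :=
  pushforward (measurable_pi_apply i) Q

theorem fapInt_sum_coordinates {ι : Type*} [Fintype ι] {Ω : ι → Type*}
    [∀ i, MeasurableSpace (Ω i)] {Q : MSet (∀ i, Ω i) → unitInterval} (hQ : IsFAP Q)
    {f : ∀ i, Ω i → ℝ} (hf : ∀ i, f i ∈ boundedMeasurable (Ω i)) :
    fapInt Q (fun ω => ∑ i, f i (ω i)) = ∑ i, fapInt (marginal Q i) (f i) := by
  have hsum : (fun ω : ∀ i, Ω i => ∑ i, f i (ω i)) = ∑ i, f i ∘ Function.eval i := by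
    ext ω
    simp
  rw [hsum, fapInt_sum hQ _ fun i _ => comp_mem_boundedMeasurable (hf i) (measurable_pi_apply i)]
  exact Finset.sum_congr rfl fun i _ => (fapInt_pushforward hQ (measurable_pi_apply i) (hf i)).symm

theorem convex_image_marginals {ι : Type*} {Ω : ι → Type*} [∀ i, MeasurableSpace (Ω i)]
    {U : Set (MSet (∀ i, Ω i) → unitInterval)} (hU : MixClosed U) :
    Convex ℝ ((fun Q i B => (marginal Q i B : ℝ)) '' U) := by
  rintro _ ⟨P, hP, rfl⟩ _ ⟨Q, hQ, rfl⟩ a b ha hb hab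
  refine ⟨_, hU P hP Q hQ ⟨b, hb, by linarith⟩, ?_⟩
  ext i B
  simp [marginal, pushforward, coe_mix, ← hab]

variable {n : ℕ} {Ω : Fin n → Type*} [∀ i, MeasurableSpace (Ω i)] (μ : ∀ i, Measure (Ω i))
  [∀ i, IsProbabilityMeasure (μ i)] {U : Set (MSet (∀ i, Ω i) → unitInterval)}

theorem mem_couplings_iff {Q : MSet (∀ i, Ω i) → unitInterval} :
    Q ∈ couplings μ ↔ IsFAP Q ∧ ∀ i, marginal Q i = ofMeasure (μ i) := by
  refine and_congr_right fun _ => forall_congr' fun i => ?_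
  simp only [funext_iff, Subtype.ext_iff, Subtype.forall]
  rfl

theorem dualCond_of_couplings_inter_nonempty (h : (couplings μ ∩ U).Nonempty) : DualCond μ U := by
  obtain ⟨Q, hQμ, hQU⟩ := h
  obtain ⟨hQ, hmarginal⟩ := (mem_couplings_iff μ).1 hQμ
  intro f hfm hfb
  have hf (i : Fin n) : f i ∈ boundedMeasurable (Ω i) := ⟨hfm i, hfb i⟩
  refine (iInf₂_le Q hQU).trans (EReal.coe_le_coe_iff.2 (le_of_eq ?_))
  simp only [fapInt_sum_coordinates hQ hf, hmarginal, fapInt_ofMeasure _ (hf _)]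

theorem couplings_inter_nonempty_of_dualCond (hFAP : U ⊆ FAPs _) (hclosed : IsClosed U)
    (hmix : MixClosed U) (hdual : DualCond μ U) : (couplings μ ∩ U).Nonempty := by
  set marginals : (MSet (∀ i, Ω i) → unitInterval) → ∀ i, MSet (Ω i) → ℝ :=
    fun Q i B => marginal Q i B
  suffices hmem : (fun i B => (ofMeasure (μ i) B : ℝ)) ∈ marginals '' U by
    obtain ⟨Q, hQU, hQ⟩ := hmem
    refine ⟨Q, (mem_couplings_iff μ).2 ⟨hFAP hQU, fun i => ?_⟩, hQU⟩
    exact funext fun B => Subtype.ext (congrFun₂ hQ i B)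
  by_contra hnot
  have hcont : Continuous marginals :=
    continuous_pi fun i => continuous_pi fun B => continuous_apply_real _
  obtain ⟨φ, u, hμu, hUu⟩ := geometric_hahn_banach_point_closed (convex_image_marginals hmix)
    (hclosed.isCompact.image hcont).isClosed hnot
  obtain ⟨f, hf, hfφ⟩ := exists_boundedMeasurable_sum_fapInt_eq φ
  have hμφ : ∑ i, ∫ x, f i x ∂(μ i) = φ fun i B => ofMeasure (μ i) B := by
    simp only [← hfφ _ fun i => isFAP_ofMeasure (μ i), fapInt_ofMeasure _ (hf _)]
  have hUφ : ∀ Q ∈ U, u ≤ fapInt Q fun ω => ∑ i, f i (ω i) := by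
    intro Q hQ
    rw [fapInt_sum_coordinates (hFAP hQ) hf, hfφ _ fun i => (hFAP hQ).pushforward _]
    exact (hUu _ ⟨Q, hQ, rfl⟩).le
  have hle : (u : EReal) ≤ (∑ i, ∫ x, f i x ∂(μ i) : ℝ) :=
    (le_iInf₂ fun Q hQ => EReal.coe_le_coe_iff.2 (hUφ Q hQ)).trans
      (hdual f (fun i => (hf i).1) fun i => (hf i).2)
  exact hμu.not_ge (hμφ ▸ EReal.coe_le_coe_iff.1 hle)

theorem couplings_inter_nonempty_iff_dualCond (hFAP : U ⊆ FAPs _) (hclosed : IsClosed U)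
    (hmix : MixClosed U) : (couplings μ ∩ U).Nonempty ↔ DualCond μ U :=
  ⟨dualCond_of_couplings_inter_nonempty μ,
    couplings_inter_nonempty_of_dualCond μ hFAP hclosed hmix⟩

end Duality

section Truncation

variable {α : Type*}

/-- The truncation `c ∧ k` of a `[0,∞]`-valued function, as a bounded real function. -/
noncomputable def trunc (c : α → ℝ≥0∞) (k : ℕ) : α → ℝ :=
  fun x => (c x ⊓ k).toReal

/-- The tail `|f|·1(|f| > k)`. -/
noncomputable def tail (f : α → ℝ) (k : ℕ) : α → ℝ≥0∞ :=
  fun x => if (k : ℝ) < |f x| then ENNReal.ofReal |f x| else 0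

/-- The function `f` clipped to `[-k, k]`, encoded as `f⁺ ∧ k - f⁻ ∧ k` to match the definition of
`fapIntR`. -/
noncomputable def clip (f : α → ℝ) (k : ℕ) : α → ℝ :=
  trunc (fun x => ENNReal.ofReal (f x)) k - trunc (fun x => ENNReal.ofReal (-f x)) k

theorem trunc_nonneg (c : α → ℝ≥0∞) (k : ℕ) (x : α) : 0 ≤ trunc c k x :=
  ENNReal.toReal_nonneg

theorem trunc_le (c : α → ℝ≥0∞) (k : ℕ) (x : α) : trunc c k x ≤ k :=
  ENNReal.toReal_le_of_le_ofReal k.cast_nonneg (by simp)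

theorem trunc_le_trunc_add_trunc_tail {c : α → ℝ≥0∞} {f : α → ℝ} {x : α}
    (hc : c x ≤ ENNReal.ofReal |f x|) (k j : ℕ) :
    trunc c j x ≤ trunc c k x + trunc (tail f k) j x := by
  by_cases hx : (k : ℝ) < |f x|
  · have hle : trunc c j x ≤ trunc (tail f k) j x := by
      simp only [trunc, tail, hx, if_true]
      gcongr
      simp
    linarith [trunc_nonneg c k x]
  · have hck : c x ≤ k := hc.trans (ENNReal.ofReal_le_of_le_toReal (by simpa using hx))
    have hle : trunc c j x ≤ trunc c k x := by
      simp only [trunc, inf_eq_left.2 hck]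
      exact ENNReal.toReal_mono (ne_top_of_le_ne_top (natCast_ne_top k) hck) inf_le_left
    linarith [trunc_nonneg (tail f k) j x]

variable [MeasurableSpace α] {P : MSet α → unitInterval}

theorem trunc_mem_boundedMeasurable {c : α → ℝ≥0∞} (hc : Measurable c) (k : ℕ) :
    trunc c k ∈ boundedMeasurable α :=
  ⟨(hc.inf_const _).ennreal_toReal, k, fun x => by
    simpa [abs_of_nonneg (trunc_nonneg c k x)] using trunc_le c k x⟩

theorem measurable_tail {f : α → ℝ} (hf : Measurable f) (k : ℕ) : Measurable (tail f k) :=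
  Measurable.ite (measurableSet_lt measurable_const hf.norm) hf.norm.ennreal_ofReal
    measurable_const

theorem clip_mem_boundedMeasurable {f : α → ℝ} (hf : Measurable f) (k : ℕ) :
    clip f k ∈ boundedMeasurable α :=
  sub_mem (trunc_mem_boundedMeasurable hf.ennreal_ofReal k)
    (trunc_mem_boundedMeasurable hf.neg.ennreal_ofReal k)

theorem ofReal_fapInt_trunc_le_fapIntTop (P : MSet α → unitInterval) (c : α → ℝ≥0∞) (k : ℕ) :
    ENNReal.ofReal (fapInt P (trunc c k)) ≤ fapIntTop P c :=
  le_iSup (fun k => ENNReal.ofReal (fapInt P (trunc c k))) k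

theorem fapIntTop_le_iff {c : α → ℝ≥0∞} {e : ℝ≥0∞} :
    fapIntTop P c ≤ e ↔ ∀ k, ENNReal.ofReal (fapInt P (trunc c k)) ≤ e :=
  iSup_le_iff

theorem fapIntTop_le_add_tail (hP : IsFAP P) {c : α → ℝ≥0∞} (hcm : Measurable c) {f : α → ℝ}
    (hf : Measurable f) (hc : ∀ x, c x ≤ ENNReal.ofReal |f x|) (k : ℕ) :
    fapIntTop P c ≤ ENNReal.ofReal (fapInt P (trunc c k)) + fapIntTop P (tail f k) := by
  refine fapIntTop_le_iff.2 fun j => ?_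
  have hck := trunc_mem_boundedMeasurable hcm k
  have htail := trunc_mem_boundedMeasurable (measurable_tail hf k) j
  have hle : fapInt P (trunc c j) ≤ fapInt P (trunc c k) + fapInt P (trunc (tail f k) j) := by
    rw [← fapInt_add hP hck htail]
    exact fapInt_mono hP ⟨0, forall_mem_range.2 (trunc_nonneg c j)⟩
      (bddAbove_range_of_mem_boundedMeasurable (add_mem hck htail))
      fun x => trunc_le_trunc_add_trunc_tail (hc x) k j
  calc ENNReal.ofReal (fapInt P (trunc c j))
      ≤ ENNReal.ofReal (fapInt P (trunc c k)) +
          ENNReal.ofReal (fapInt P (trunc (tail f k) j)) :=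
        (ENNReal.ofReal_le_ofReal hle).trans ENNReal.ofReal_add_le
    _ ≤ ENNReal.ofReal (fapInt P (trunc c k)) + fapIntTop P (tail f k) := by
        gcongr
        exact ofReal_fapInt_trunc_le_fapIntTop P _ j

theorem fapIntTop_toReal_mem_Icc (hP : IsFAP P) {c : α → ℝ≥0∞} (hcm : Measurable c) {f : α → ℝ}
    (hf : Measurable f) (hc : ∀ x, c x ≤ ENNReal.ofReal |f x|) {k : ℕ}
    (htail : fapIntTop P (tail f k) ≠ ⊤) :
    (fapIntTop P c).toReal ∈ Icc (fapInt P (trunc c k))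
      (fapInt P (trunc c k) + (fapIntTop P (tail f k)).toReal) := by
  have hle := fapIntTop_le_add_tail hP hcm hf hc k
  have hsum : ENNReal.ofReal (fapInt P (trunc c k)) + fapIntTop P (tail f k) ≠ ⊤ :=
    ENNReal.add_ne_top.2 ⟨ENNReal.ofReal_ne_top, htail⟩
  have hnonneg : 0 ≤ fapInt P (trunc c k) :=
    fapInt_nonneg hP (bddAbove_range_of_mem_boundedMeasurable (trunc_mem_boundedMeasurable hcm k))
      (trunc_nonneg c k)
  refine ⟨(ENNReal.ofReal_le_iff_le_toReal (ne_top_of_le_ne_top hsum hle)).1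
    (ofReal_fapInt_trunc_le_fapIntTop P c k), ?_⟩
  rw [← ENNReal.toReal_ofReal hnonneg, ← ENNReal.toReal_add ENNReal.ofReal_ne_top htail]
  exact ENNReal.toReal_mono hsum hle

theorem fapIntegrable_of_fapIntTop_tail_ne_top (hP : IsFAP P) {f : α → ℝ} (hf : Measurable f)
    {k : ℕ} (htail : fapIntTop P (tail f k) ≠ ⊤) : FapIntegrable P f :=
  (fapIntTop_le_add_tail hP hf.norm.ennreal_ofReal hf (fun _ => le_rfl) k).trans_lt
    (ENNReal.add_lt_top.2 ⟨ENNReal.ofReal_lt_top, htail.lt_top⟩)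

theorem ofReal_abs_fapIntR_sub_fapInt_clip_le (hP : IsFAP P) {f : α → ℝ} (hf : Measurable f)
    (k : ℕ) :
    ENNReal.ofReal |fapIntR P f - fapInt P (clip f k)| ≤ fapIntTop P (tail f k) := by
  have hneg : Measurable fun x => ENNReal.ofReal (-f x) := hf.neg.ennreal_ofReal
  rcases eq_or_ne (fapIntTop P (tail f k)) ⊤ with htop | htail
  · exact htop ▸ le_top
  obtain ⟨hpos_ge, hpos_le⟩ := fapIntTop_toReal_mem_Icc hP hf.ennreal_ofReal hf
    (fun x => ENNReal.ofReal_le_ofReal (le_abs_self _)) htail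
  obtain ⟨hneg_ge, hneg_le⟩ := fapIntTop_toReal_mem_Icc hP hneg hf
    (fun x => ENNReal.ofReal_le_ofReal (neg_le_abs _)) htail
  refine ENNReal.ofReal_le_of_le_toReal ?_
  rw [clip, fapInt_sub hP (trunc_mem_boundedMeasurable hf.ennreal_ofReal k)
    (trunc_mem_boundedMeasurable hneg k), fapIntR]
  exact abs_le.2 ⟨by linarith, by linarith⟩

end Truncation

section MomentClass

variable {α : Type*} [MeasurableSpace α] {P Q : MSet α → unitInterval} {f : α → ℝ}
  {ε : ℕ → ℝ≥0∞}

/-- Quantitative form of the constraint `Q(f) = 0`, with a prescribed rate `ε` for the tails of `f`.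
Unlike `Q(f) = 0`, it only involves integrals of bounded functions, hence it is closed in `Q`. -/
def MomentBounds (f : α → ℝ) (ε : ℕ → ℝ≥0∞) (Q : MSet α → unitInterval) : Prop :=
  ∀ k, fapIntTop Q (tail f k) ≤ ε k ∧ ENNReal.ofReal |fapInt Q (clip f k)| ≤ ε k

theorem momentBounds_of_fapIntR_eq_zero (hQ : IsFAP Q) (hf : Measurable f)
    (htail : ∀ k, fapIntTop Q (tail f k) ≤ ε k) (hzero : fapIntR Q f = 0) :
    MomentBounds f ε Q := by
  refine fun k => ⟨htail k, le_trans ?_ (htail k)⟩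
  simpa only [hzero, zero_sub, abs_neg] using ofReal_abs_fapIntR_sub_fapInt_clip_le hQ hf k

theorem MomentBounds.fapIntegrable (h : MomentBounds f ε Q) (hQ : IsFAP Q) (hf : Measurable f)
    (hε : Filter.Tendsto ε Filter.atTop (nhds 0)) : FapIntegrable Q f := by
  obtain ⟨k, hk⟩ := (hε.eventually_lt_const zero_lt_top).exists
  exact fapIntegrable_of_fapIntTop_tail_ne_top hQ hf ((h k).1.trans_lt hk).ne

theorem MomentBounds.fapIntR_eq_zero (h : MomentBounds f ε Q) (hQ : IsFAP Q) (hf : Measurable f)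
    (hε : Filter.Tendsto ε Filter.atTop (nhds 0)) : fapIntR Q f = 0 := by
  have hle (k : ℕ) : ENNReal.ofReal |fapIntR Q f| ≤ ε k + ε k :=
    calc ENNReal.ofReal |fapIntR Q f|
        ≤ ENNReal.ofReal |fapIntR Q f - fapInt Q (clip f k)| +
            ENNReal.ofReal |fapInt Q (clip f k)| := by
          refine (ENNReal.ofReal_le_ofReal ?_).trans ENNReal.ofReal_add_le
          linarith [abs_sub_abs_le_abs_sub (fapIntR Q f) (fapInt Q (clip f k))]
      _ ≤ ε k + ε k :=
          add_le_add ((ofReal_abs_fapIntR_sub_fapInt_clip_le hQ hf k).trans (h k).1) (h k).2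
  have hlim : ENNReal.ofReal |fapIntR Q f| ≤ 0 :=
    ge_of_tendsto' (by simpa using hε.add hε) hle
  simpa using hlim

theorem fapIntTop_mix_le (hP : IsFAP P) (hQ : IsFAP Q) {c : α → ℝ≥0∞} (hc : Measurable c)
    {e : ℝ≥0∞} (hPc : fapIntTop P c ≤ e) (hQc : fapIntTop Q c ≤ e) (t : unitInterval) :
    fapIntTop (mix P Q t) c ≤ e :=
  fapIntTop_le_iff.2 fun k =>
    fapInt_mix_mem (C := {y | ENNReal.ofReal y ≤ e})
      (ENNReal.ofReal_mono.convex_le e) hP hQ (trunc_mem_boundedMeasurable hc k)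
      (fapIntTop_le_iff.1 hPc k) (fapIntTop_le_iff.1 hQc k) t

theorem convex_setOf_ofReal_abs_le (e : ℝ≥0∞) : Convex ℝ {y : ℝ | ENNReal.ofReal |y| ≤ e} := by
  have heq : {y : ℝ | ENNReal.ofReal |y| ≤ e} =
      {y | ENNReal.ofReal y ≤ e} ∩ {y | ENNReal.ofReal (-y) ≤ e} := by
    ext y
    simp only [mem_ofPred_eq, mem_inter_iff, abs, ENNReal.ofReal_max, max_le_iff]
  rw [heq]
  exact (ENNReal.ofReal_mono.convex_le e).inter
    ((ENNReal.ofReal_mono.comp_antitone fun _ _ => neg_le_neg).convex_le e)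

theorem MomentBounds.mix (hP : IsFAP P) (hQ : IsFAP Q) (hf : Measurable f)
    (hPf : MomentBounds f ε P) (hQf : MomentBounds f ε Q) (t : unitInterval) :
    MomentBounds f ε (mix P Q t) := fun k =>
  ⟨fapIntTop_mix_le hP hQ (measurable_tail hf k) (hPf k).1 (hQf k).1 t,
    fapInt_mix_mem (convex_setOf_ofReal_abs_le (ε k)) hP hQ (clip_mem_boundedMeasurable hf k)
      (hPf k).2 (hQf k).2 t⟩

theorem isClosed_setOf_fapIntTop_le {c : α → ℝ≥0∞} (hc : Measurable c) (e : ℝ≥0∞) :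
    IsClosed {P | IsFAP P ∧ fapIntTop P c ≤ e} := by
  simp only [fapIntTop_le_iff, ← forall_and_left, ofPred_forall]
  exact isClosed_iInter fun k => isClosed_setOf_fapInt_mem (trunc_mem_boundedMeasurable hc k)
    (isClosed_le ENNReal.continuous_ofReal continuous_const)

theorem isClosed_setOf_momentBounds (hf : Measurable f) (ε : ℕ → ℝ≥0∞) :
    IsClosed {Q | IsFAP Q ∧ MomentBounds f ε Q} := by
  have heq : {Q | IsFAP Q ∧ MomentBounds f ε Q} =
      ⋂ k, {Q | IsFAP Q ∧ fapIntTop Q (tail f k) ≤ ε k} ∩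
        {Q | IsFAP Q ∧ ENNReal.ofReal |fapInt Q (clip f k)| ≤ ε k} := by
    ext Q
    simp only [MomentBounds, mem_ofPred_eq, mem_iInter, mem_inter_iff, ← and_and_left,
      forall_and_left]
  rw [heq]
  exact isClosed_iInter fun k =>
    (isClosed_setOf_fapIntTop_le (measurable_tail hf k) (ε k)).inter
      (isClosed_setOf_fapInt_mem (clip_mem_boundedMeasurable hf k)
        (isClosed_le (ENNReal.continuous_ofReal.comp continuous_abs) continuous_const))

/-- The finitely additive probabilities `Q ≪ R` that satisfy the quantitative moment constraints
`MomentBounds f (ε f) Q` for all `f ∈ F`. -/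
def momentClass (R : MSet α → unitInterval) (F : Set (α → ℝ)) (ε : (α → ℝ) → ℕ → ℝ≥0∞) :
    Set (MSet α → unitInterval) :=
  {Q | IsFAP Q ∧ FapAC Q R ∧ ∀ f ∈ F, MomentBounds f (ε f) Q}

variable {R : MSet α → unitInterval} {F : Set (α → ℝ)}

theorem mixClosed_momentClass (hF : ∀ f ∈ F, Measurable f) (ε : (α → ℝ) → ℕ → ℝ≥0∞) :
    MixClosed (momentClass R F ε) :=
  fun _ ⟨hP, hPR, hPF⟩ _ ⟨hQ, hQR, hQF⟩ t =>
    ⟨hP.mix hQ t, hPR.mix hQR t, fun f hf => .mix hP hQ (hF f hf) (hPF f hf) (hQF f hf) t⟩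

theorem isClosed_momentClass (hF : ∀ f ∈ F, Measurable f) (ε : (α → ℝ) → ℕ → ℝ≥0∞) :
    IsClosed (momentClass R F ε) := by
  have heq : momentClass R F ε =
      FAPs α ∩ {Q | FapAC Q R} ∩ ⋂ f ∈ F, {Q | IsFAP Q ∧ MomentBounds f (ε f) Q} := by
    ext Q
    simp only [momentClass, FAPs, mem_inter_iff, mem_iInter, mem_ofPred_eq]
    grind
  rw [heq]
  exact (isClosed_FAPs.inter (isClosed_setOf_fapAC R)).inter
    (isClosed_biInter fun f hf => isClosed_setOf_momentBounds (hF f hf) (ε f))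

theorem exists_eq_momentClass (hF : ∀ f ∈ F, Measurable f) {U : Set (MSet α → unitInterval)}
    (hU : U = {Q | IsFAP Q ∧ FapAC Q R ∧ ∀ f ∈ F, FapIntegrable Q f ∧ fapIntR Q f = 0})
    (hUI : ∀ f ∈ F, Filter.Tendsto (fun k => ⨆ Q ∈ U, fapIntTop Q (tail f k)) Filter.atTop
      (nhds 0)) :
    ∃ ε, U = momentClass R F ε := by
  refine ⟨fun f k => ⨆ Q ∈ U, fapIntTop Q (tail f k), Subset.antisymm ?_ ?_⟩
  · intro Q hQU
    obtain ⟨hQ, hQR, hQF⟩ := hU ▸ hQU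
    exact ⟨hQ, hQR, fun f hf => momentBounds_of_fapIntR_eq_zero hQ (hF f hf)
      (fun k => le_biSup (fun Q => fapIntTop Q (tail f k)) hQU) (hQF f hf).2⟩
  · rintro Q ⟨hQ, hQR, hQF⟩
    rw [hU]
    exact ⟨hQ, hQR, fun f hf => ⟨(hQF f hf).fapIntegrable hQ (hF f hf) (hUI f hf),
      (hQF f hf).fapIntR_eq_zero hQ (hF f hf) (hUI f hf)⟩⟩

end MomentClass

/-- let `𝒰 = {Q ∈ ℙ : Q ≪ P*, Q(|f|) < ∞ and Q(f) = 0 for each f ∈ F}`.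
If `lim_k sup_{Q ∈ 𝒰} Q(|f|·1(|f|>k)) = 0` for all `f ∈ F`, then `M ∩ 𝒰 ≠ ∅` iff
`Σᵢ μᵢ(fᵢ) ≥ inf_{Q ∈ 𝒰} Q(⊕ᵢ fᵢ)` for all bounded measurable `fᵢ` (with `inf ∅ = ∞`). -/
theorem nonempty_iff_dualCond_ac_F
    {n : ℕ} (hn : 0 < n) {Ω : Fin n → Type*} [∀ i, MeasurableSpace (Ω i)]
    (μ : ∀ i, Measure (Ω i)) [∀ i, IsProbabilityMeasure (μ i)]
    (Pstar : MSet (∀ i, Ω i) → unitInterval) (hPstar : IsFAP Pstar)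
    (F : Set ((∀ i, Ω i) → ℝ)) (hF : ∀ f ∈ F, Measurable f)
    (U : Set (MSet (∀ i, Ω i) → unitInterval))
    (hU : U = {Q | IsFAP Q ∧ FapAC Q Pstar ∧
      ∀ f ∈ F, FapIntegrable Q f ∧ fapIntR Q f = 0})
    (hUI : ∀ f ∈ F,
      Filter.Tendsto
        (fun k : ℕ => ⨆ Q ∈ U,
          fapIntTop Q (fun ω => if (k : ℝ) < |f ω| then ENNReal.ofReal |f ω| else 0))
        Filter.atTop (nhds 0)) :
    (couplings μ ∩ U).Nonempty ↔ DualCond μ U := by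
  obtain ⟨ε, rfl⟩ := exists_eq_momentClass hF hU hUI
  exact couplings_inter_nonempty_iff_dualCond μ (fun _ hQ => hQ.1) (isClosed_momentClass hF ε)
    (mixClosed_momentClass hF ε)

end FATransport
end

section
/- Let ℛ be the field on [0,1]² generated by the measurable rectangles A_1 × A_2 with A_1, A_2 ∈ ℬ([0,1]). Then T(A) = 1 whenever A ∈ ℛ and A ⊃ {(x,y) ∈ [0,1]² : x > y}. -/
open MeasureTheory Set ENNReal

namespace FATransport

variable {α : Type*} [MeasurableSpace α]

/-- Lebesgue measure `m` on `ℬ([0,1])`. -/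
noncomputable def mI : Measure unitInterval := volume

/-- The diagonal coupling `T ∈ Γ`, i.e. the image of `m` under `x ↦ (x,x)`. -/
noncomputable def TI : Measure (unitInterval × unitInterval) :=
  mI.map (fun x => (x, x))

/-- `P` has both marginals equal to Lebesgue measure `m` on `[0,1]`. -/
def HasLebesgueMarginals (P : MSet (unitInterval × unitInterval) → unitInterval) : Prop :=
  (∀ (B : Set unitInterval) (hB : MeasurableSet B),
    (P ⟨Prod.fst ⁻¹' B, measurable_fst hB⟩ : ℝ) = (mI B).toReal) ∧
  (∀ (B : Set unitInterval) (hB : MeasurableSet B),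
    (P ⟨Prod.snd ⁻¹' B, measurable_snd hB⟩ : ℝ) = (mI B).toReal)

/-- The set `{(x,y) ∈ [0,1]² : x > y}`. -/
def Sgt : Set (unitInterval × unitInterval) := {p | (p.2 : ℝ) < (p.1 : ℝ)}

/-- The set `{(x,y) ∈ [0,1]² : x < y}`. -/
def Slt : Set (unitInterval × unitInterval) := {p | (p.1 : ℝ) < (p.2 : ℝ)}

/-- The set `{(x,y) ∈ [0,1]² : x ≤ y}`. -/
def Sle : Set (unitInterval × unitInterval) := {p | (p.1 : ℝ) ≤ (p.2 : ℝ)}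

/-- The diagonal `{(x,y) ∈ [0,1]² : x = y}`. -/
def Sdiag : Set (unitInterval × unitInterval) := {p | (p.1 : ℝ) = (p.2 : ℝ)}

lemma measSgt : MeasurableSet Sgt :=
  measurableSet_lt (measurable_subtype_coe.comp measurable_snd)
    (measurable_subtype_coe.comp measurable_fst)

lemma measSlt : MeasurableSet Slt :=
  measurableSet_lt (measurable_subtype_coe.comp measurable_fst)
    (measurable_subtype_coe.comp measurable_snd)

lemma measSle : MeasurableSet Sle :=
  measurableSet_le (measurable_subtype_coe.comp measurable_fst)
    (measurable_subtype_coe.comp measurable_snd)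

lemma measSdiag : MeasurableSet Sdiag :=
  measurableSet_eq_fun (measurable_subtype_coe.comp measurable_fst)
    (measurable_subtype_coe.comp measurable_snd)

end FATransport

namespace FATransport

/-- The field (algebra of sets) generated by a collection `S` of subsets. -/
inductive genField {β : Type*} (S : Set (Set β)) : Set β → Prop
  | basic : ∀ s ∈ S, genField S s
  | empty : genField S ∅
  | compl : ∀ s, genField S s → genField S sᶜ
  | union : ∀ s t, genField S s → genField S t → genField S (s ∪ t)

/-!
A set in the field of rectangles has only finitely many distinct vertical sections
`A_x = {y | (x, y) ∈ A}`. If `y < x` and `A_x = A_y`, then `y ∈ A_x` because `A` contains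
`{x > y}`, hence `y ∈ A_y`. So `x ↦ A_x` is injective on the points whose diagonal copy misses `A`,
which are therefore finitely many.
-/

theorem genField.mono {β : Type*} {S S' : Set (Set β)} {A : Set β} (hA : genField S A)
    (h : S ⊆ S') : genField S' A := by
  induction hA with
  | basic s hs => exact .basic s (h hs)
  | empty => exact .empty
  | compl s _ ih => exact .compl s ih
  | union s t _ _ ihs iht => exact .union s t ihs iht

theorem genField.finite_range_preimage_prodMk {α β : Type*} {A : Set (α × β)}
    (hA : genField {R : Set (α × β) | ∃ A₁ A₂, R = A₁ ×ˢ A₂} A) :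
    (range fun x => Prod.mk x ⁻¹' A).Finite := by
  induction hA with
  | basic R hR =>
    obtain ⟨A₁, A₂, rfl⟩ := hR
    refine (toFinite {A₂, ∅}).subset (range_subset_iff.2 fun x => ?_)
    by_cases hx : x ∈ A₁
    · exact .inl (mk_preimage_prod_right hx)
    · exact .inr (mk_preimage_prod_right_eq_empty hx)
  | empty => exact (finite_singleton ∅).subset (range_subset_iff.2 fun _ => rfl)
  | compl s _ ih =>
    exact (ih.image (·ᶜ)).subset
      (range_subset_iff.2 fun x => ⟨_, mem_range_self x, preimage_compl.symm⟩)
  | union s t _ _ ihs iht =>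
    exact (ihs.image2 (· ∪ ·) iht).subset
      (range_subset_iff.2 fun x => mem_image2_of_mem (mem_range_self x) (mem_range_self x))

section LinearOrder

variable {α : Type*} [LinearOrder α] {A : Set (α × α)}

theorem injOn_preimage_prodMk_of_setOf_lt_subset (hsub : {p : α × α | p.2 < p.1} ⊆ A) :
    InjOn (fun x => Prod.mk x ⁻¹' A) {x | (x, x) ∉ A} := by
  have diag_mem {x y : α} (hlt : y < x) (heq : Prod.mk x ⁻¹' A = Prod.mk y ⁻¹' A) :
      (y, y) ∈ A :=
    heq.subset (hsub hlt : (x, y) ∈ A)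
  intro x hx y hy heq
  rcases lt_trichotomy x y with hlt | rfl | hlt
  · exact absurd (diag_mem hlt heq.symm) hx
  · rfl
  · exact absurd (diag_mem hlt heq) hy

theorem T_eq_one_on_rect_field_general [MeasurableSpace α] (μ : Measure α) [NullSingletonClass μ]
    (hA : genField {R : Set (α × α) | ∃ A₁ A₂, R = A₁ ×ˢ A₂} A)
    (hsub : {p : α × α | p.2 < p.1} ⊆ A) :
    μ {x | (x, x) ∈ A} = μ univ := by
  have finite_notMem : {x | (x, x) ∉ A}.Finite :=
    .of_finite_image (hA.finite_range_preimage_prodMk.subset (image_subset_range _ _))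
      (injOn_preimage_prodMk_of_setOf_lt_subset hsub)
  have ae_mem : ∀ᵐ x ∂μ, (x, x) ∈ A := finite_notMem.measure_zero μ
  exact measure_congr (Filter.eventuallyEq_univ.2 ae_mem)

end LinearOrder

/-- if `ℛ` is the field on `[0,1]²` generated by the measurable
rectangles `A₁ × A₂` (`A₁, A₂ ∈ ℬ([0,1])`), then `T(A) = 1` whenever `A ∈ ℛ` and
`A ⊇ {(x,y) : x > y}`, where `T(A) = m {x : (x,x) ∈ A}`. -/
theorem T_eq_one_on_rect_field
    (A : Set (unitInterval × unitInterval))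
    (hA : genField {R : Set (unitInterval × unitInterval) |
      ∃ A₁ A₂ : Set unitInterval, MeasurableSet A₁ ∧ MeasurableSet A₂ ∧ R = A₁ ×ˢ A₂} A)
    (hsub : Sgt ⊆ A) :
    mI {x : unitInterval | (x, x) ∈ A} = 1 := by
  have hA_rect : genField {R | ∃ A₁ A₂, R = A₁ ×ˢ A₂} A :=
    hA.mono fun _ ⟨A₁, A₂, _, _, hR⟩ => ⟨A₁, A₂, hR⟩
  exact (T_eq_one_on_rect_field_general volume hA_rect hsub).trans measure_univ

end FATransport
end

section
/- There exists a finitely additive probability P on ℬ([0,1]²) such that both marginals of P are Lebesgue measure m (i.e. P(π_1 ∈ B) = P(π_2 ∈ B) = m(B) for all B ∈ ℬ([0,1])) and P({(x,y) : x > y}) = 1; similarly, there exists a finitely additive probability P̃ with both marginals equal to m and P̃({(x,y) : x < y}) = 1. -/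
open MeasureTheory Set ENNReal

/-!
On the circle `ℝ/ℤ`, read as `(0,1]`, let `θ` be uniform. The pair `(θ + ε, θ)` has uniform
marginals, and its first coordinate exceeds the second unless the rotation by `ε` wraps around,
which has probability `ε`. By compactness of `[0,1]^𝒜` the laws of these pairs have a limit point
as `ε → 0⁺`. Finite additivity survives pointwise limits, so the limit point is a finitely additive
probability; it keeps the marginals and gives `{x > y}` mass `1`. (A countably additive
probability cannot do so, because the coordinates would have equal means.) Exchanging the
coordinates gives the other half.
-/

namespace FATransport

open Filter Topology

theorem measurePreserving_of_embedding_comp {α β γ : Type*} [MeasurableSpace α]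
    [MeasurableSpace β] [MeasurableSpace γ] {μ : Measure α} {ν : Measure β} {ρ : Measure γ}
    {f : α → β} {g : β → γ} (hg : MeasurableEmbedding g) (hgρ : MeasurePreserving g ν ρ)
    (hgf : MeasurePreserving (g ∘ f) μ ρ) : MeasurePreserving f μ ν := by
  have hf : Measurable f := hg.measurable_comp_iff.1 hgf.measurable
  refine ⟨hf, ?_⟩
  rw [← hg.comap_map (μ.map f), Measure.map_map hg.measurable hf, hgf.map_eq, ← hgρ.map_eq,
    hg.comap_map]

section FiniteAdditivity

variable {α β ι : Type*} [MeasurableSpace α] [MeasurableSpace β]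

theorem IsFAP.preimage {P : MSet α → unitInterval} (hP : IsFAP P) {f : α → β}
    (hf : Measurable f) : IsFAP fun A : MSet β => P ⟨f ⁻¹' A.1, hf A.2⟩ :=
  ⟨hP.1, fun A B hAB => hP.2 ⟨f ⁻¹' A.1, hf A.2⟩ ⟨f ⁻¹' B.1, hf B.2⟩ (hAB.preimage f)⟩

theorem isClosed_setOf_isFAP : IsClosed {P : MSet α → unitInterval | IsFAP P} := by
  simp only [IsFAP, ofPred_and, ofPred_forall]
  refine IsClosed.inter (isClosed_eq (by fun_prop) continuous_const) ?_
  exact isClosed_iInter fun A => isClosed_iInter fun B => isClosed_iInter fun _ =>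
    isClosed_eq (by fun_prop) (by fun_prop)

theorem exists_isFAP_eq_of_tendsto (l : Filter ι) [l.NeBot] {P : ι → MSet α → unitInterval}
    (hP : ∀ i, IsFAP (P i)) :
    ∃ Q : MSet α → unitInterval, IsFAP Q ∧
      ∀ (A : MSet α) (c : ℝ), Tendsto (fun i => (P i A : ℝ)) l (𝓝 c) → (Q A : ℝ) = c := by
  let 𝒰 := Ultrafilter.of l
  let Q := (𝒰.map P).lim
  have tendsto_Q : Tendsto P 𝒰 (𝓝 Q) := Ultrafilter.le_nhds_lim _
  refine ⟨Q, isClosed_setOf_isFAP.mem_of_tendsto tendsto_Q (Eventually.of_forall hP),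
    fun A c hc => ?_⟩
  have tendsto_Q_apply : Tendsto (fun i => (P i A : ℝ)) 𝒰 (𝓝 (Q A : ℝ)) :=
    (continuous_subtype_val.tendsto _).comp (tendsto_pi_nhds.1 tendsto_Q A)
  exact tendsto_nhds_unique tendsto_Q_apply (hc.mono_left (Ultrafilter.of_le l))

/-- A countably additive probability, seen as a point of `[0,1]^𝒜`. -/
noncomputable def measureFAP (μ : Measure α) [IsProbabilityMeasure μ] : MSet α → unitInterval :=
  fun A => ⟨μ.real A.1, measureReal_nonneg, measureReal_le_one⟩

theorem isFAP_measureFAP (μ : Measure α) [IsProbabilityMeasure μ] : IsFAP (measureFAP μ) :=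
  ⟨probReal_univ, fun _ B hAB => measureReal_union hAB B.2⟩

end FiniteAdditivity

section RotationCoupling

/-- The representative in `(0,1]` of a point of the circle `ℝ/ℤ`, as a point of `[0,1]`. -/
noncomputable def circleRep (θ : UnitAddCircle) : unitInterval :=
  ⟨AddCircle.equivIoc 1 0 θ, (AddCircle.equivIoc 1 0 θ).2.1.le, by
    simpa using (AddCircle.equivIoc (1 : ℝ) 0 θ).2.2⟩

theorem coe_circleRep (θ : UnitAddCircle) : ((circleRep θ : ℝ) : UnitAddCircle) = θ :=
  AddCircle.coe_equivIoc

theorem circleRep_pos (θ : UnitAddCircle) : 0 < (circleRep θ : ℝ) :=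
  (AddCircle.equivIoc 1 0 θ).2.1

theorem circleRep_coe {x : ℝ} (hx : x ∈ Ioc 0 1) : (circleRep x : ℝ) = x :=
  AddCircle.equivIoc_coe_of_mem (by simpa using hx)

theorem circleRep_add_coe {θ : UnitAddCircle} {ε : ℝ}
    (hθ : (circleRep θ : ℝ) + ε ∈ Ioc 0 1) :
    (circleRep (θ + ε) : ℝ) = circleRep θ + ε := by
  rw [← circleRep_coe hθ, AddCircle.coe_add, coe_circleRep]

theorem measurePreserving_circleRep : MeasurePreserving circleRep := by
  have restrict_eq : volume.restrict (Ioc (0 : ℝ) (0 + 1)) = volume.restrict (Icc 0 1) := by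
    rw [zero_add, Measure.restrict_congr_set Ioc_ae_eq_Icc]
  have coe_comp_preserving :
      MeasurePreserving ((↑) ∘ circleRep : UnitAddCircle → ℝ) volume
        (volume.restrict (Icc 0 1)) := by
    rw [← restrict_eq]
    exact (measurePreserving_subtype_coe measurableSet_Ioc).comp
      (AddCircle.measurePreserving_equivIoc 1)
  exact measurePreserving_of_embedding_comp unitInterval.measurableEmbedding_coe
    unitInterval.measurePreserving_coe coe_comp_preserving

theorem measurePreserving_circleRep_add (a : UnitAddCircle) :
    MeasurePreserving fun θ => circleRep (θ + a) :=
  measurePreserving_circleRep.comp (measurePreserving_add_right volume a)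

/-- The point of `[0,1]²` representing the pair `(θ + ε, θ)` of points of the circle `ℝ/ℤ`. -/
noncomputable def rotationPair (ε : ℝ) (θ : UnitAddCircle) : unitInterval × unitInterval :=
  (circleRep (θ + ε), circleRep θ)

theorem measurable_rotationPair (ε : ℝ) : Measurable (rotationPair ε) :=
  (measurePreserving_circleRep_add ε).measurable.prodMk measurePreserving_circleRep.measurable

/-- The law of `rotationPair ε θ` for a uniform `θ` on the circle. It is a coupling of Lebesgue
measure on `[0,1]` with itself. -/
noncomputable def rotationCoupling (ε : ℝ) : Measure (unitInterval × unitInterval) :=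
  volume.map (rotationPair ε)

theorem measurePreserving_fst_rotationCoupling (ε : ℝ) :
    MeasurePreserving Prod.fst (rotationCoupling ε) volume :=
  (measurePreserving_circleRep_add ε).map_of_comp measurable_fst (measurable_rotationPair ε)

theorem measurePreserving_snd_rotationCoupling (ε : ℝ) :
    MeasurePreserving Prod.snd (rotationCoupling ε) volume :=
  MeasurePreserving.map_of_comp measurePreserving_circleRep measurable_snd
    (measurable_rotationPair ε)

instance (ε : ℝ) : IsProbabilityMeasure (rotationCoupling ε) :=
  have : IsProbabilityMeasure (volume : Measure UnitAddCircle) := ⟨UnitAddCircle.measure_univ⟩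
  Measure.isProbabilityMeasure_map (measurable_rotationPair ε).aemeasurable

theorem one_sub_le_rotationCoupling_real_Sgt {ε : ℝ} (hε : 0 < ε) (hε₁ : ε ≤ 1) :
    1 - ε ≤ (rotationCoupling ε).real Sgt := by
  let t : unitInterval := ⟨1 - ε, sub_nonneg.2 hε₁, sub_le_self 1 hε.le⟩
  have Iic_subset : circleRep ⁻¹' Iic t ⊆ rotationPair ε ⁻¹' Sgt := by
    intro θ (hθ : (circleRep θ : ℝ) ≤ 1 - ε)
    change (circleRep θ : ℝ) < circleRep (θ + ε)
    rw [circleRep_add_coe ⟨add_pos (circleRep_pos θ) hε, le_sub_iff_add_le.1 hθ⟩]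
    exact lt_add_of_pos_right _ hε
  calc 1 - ε = volume.real (Iic t) := by
        rw [measureReal_def, unitInterval.volume_Iic, ENNReal.toReal_ofReal t.2.1]
    _ = volume.real (circleRep ⁻¹' Iic t) :=
        (measurePreserving_circleRep.measureReal_preimage measurableSet_Iic.nullMeasurableSet).symm
    _ ≤ volume.real (rotationPair ε ⁻¹' Sgt) :=
        measureReal_mono Iic_subset
    _ = (rotationCoupling ε).real Sgt :=
        (map_measureReal_apply (measurable_rotationPair ε) measSgt).symm

theorem tendsto_rotationCoupling_real_Sgt :
    Tendsto (fun ε => (rotationCoupling ε).real Sgt) (𝓝[>] 0) (𝓝 1) := by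
  have lower_tendsto : Tendsto (fun ε : ℝ => 1 - ε) (𝓝[>] 0) (𝓝 1) :=
    (Continuous.tendsto' (by fun_prop) 0 1 (sub_zero 1)).mono_left nhdsWithin_le_nhds
  refine tendsto_of_tendsto_of_tendsto_of_le_of_le' lower_tendsto tendsto_const_nhds ?_
    (Eventually.of_forall fun _ => measureReal_le_one)
  filter_upwards [Ioc_mem_nhdsGT one_pos] with ε hε
  exact one_sub_le_rotationCoupling_real_Sgt hε.1 hε.2

end RotationCoupling

theorem exists_isFAP_hasLebesgueMarginals_Sgt_eq_one :
    ∃ P : MSet (unitInterval × unitInterval) → unitInterval,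
      IsFAP P ∧ HasLebesgueMarginals P ∧ (P ⟨Sgt, measSgt⟩ : ℝ) = 1 := by
  obtain ⟨P, hP, eq_of_tendsto⟩ :=
    exists_isFAP_eq_of_tendsto (𝓝[>] (0 : ℝ)) fun ε => isFAP_measureFAP (rotationCoupling ε)
  have fst_marginal (B : Set unitInterval) (hB : MeasurableSet B) (ε : ℝ) :
      (rotationCoupling ε).real (Prod.fst ⁻¹' B) = mI.real B :=
    (measurePreserving_fst_rotationCoupling ε).measureReal_preimage hB.nullMeasurableSet
  have snd_marginal (B : Set unitInterval) (hB : MeasurableSet B) (ε : ℝ) :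
      (rotationCoupling ε).real (Prod.snd ⁻¹' B) = mI.real B :=
    (measurePreserving_snd_rotationCoupling ε).measureReal_preimage hB.nullMeasurableSet
  refine ⟨P, hP, ⟨fun B hB => ?_, fun B hB => ?_⟩,
    eq_of_tendsto _ _ tendsto_rotationCoupling_real_Sgt⟩
  · exact eq_of_tendsto _ _ (tendsto_const_nhds.congr fun ε => (fst_marginal B hB ε).symm)
  · exact eq_of_tendsto _ _ (tendsto_const_nhds.congr fun ε => (snd_marginal B hB ε).symm)

/-- there are finitely additive probabilities `P` and `P̃` on
`ℬ([0,1]²)`, both with both marginals equal to Lebesgue measure `m`, such that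
`P({x > y}) = 1` and `P̃({x < y}) = 1`. -/
theorem exists_fap_strictly_below_and_above_diagonal :
    (∃ P : MSet (unitInterval × unitInterval) → unitInterval,
      IsFAP P ∧ HasLebesgueMarginals P ∧ (P ⟨Sgt, measSgt⟩ : ℝ) = 1) ∧
    (∃ Pt : MSet (unitInterval × unitInterval) → unitInterval,
      IsFAP Pt ∧ HasLebesgueMarginals Pt ∧ (Pt ⟨Slt, measSlt⟩ : ℝ) = 1) := by
  obtain ⟨P, hP, ⟨fst_marginal, snd_marginal⟩, hPgt⟩ :=
    exists_isFAP_hasLebesgueMarginals_Sgt_eq_one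
  exact ⟨⟨P, hP, ⟨fst_marginal, snd_marginal⟩, hPgt⟩,
    ⟨_, hP.preimage measurable_swap, ⟨snd_marginal, fst_marginal⟩, hPgt⟩⟩

end FATransport
end
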